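/- Let F be a finite field of odd cardinality q, and let sl₂(F) be the 3-dimensional F-vector space of trace-zero 2×2 matrices over F, with the nondegenerate quadratic form A ↦ det A. Then the group of all F-linear automorphisms of sl₂(F) preserving this quadratic form is isomorphic to (ℤ/2ℤ) × PGL(2,F), where PGL(2,F) is the quotient of GL(2,F) by its subgroup of scalar matrices; the PGL(2,F)-factor acts by conjugation A ↦ g A g⁻¹ and the ℤ/2ℤ-factor is generated by A ↦ −A. -/

import Mathlib

noncomputable section

open Matrix

variable (F : Type) [Field F]

/-- The space `sl₂(F)` of trace-zero `2 × 2` matrices. -/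
def sl2 : Submodule F (Matrix (Fin 2) (Fin 2) F) :=
  LinearMap.ker (Matrix.traceLinearMap (Fin 2) F F)

/-- The isometry group of the quadratic space `(sl₂(F), det)`, i.e. `O(3, q)`. -/
def O3 : Subgroup ((sl2 F) ≃ₗ[F] (sl2 F)) where
  carrier := {T | ∀ A : sl2 F,
    ((T A : Matrix (Fin 2) (Fin 2) F)).det = ((A : Matrix (Fin 2) (Fin 2) F)).det}
  one_mem' := fun A => rfl
  mul_mem' := by
    intro f g hf hg A
    have h1 : (f * g) A = f (g A) := rfl
    rw [h1, hf, hg]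
  inv_mem' := by
    intro f hf A
    have h1 : f (f⁻¹ A) = A := f.apply_symm_apply A
    have := hf (f⁻¹ A)
    rw [h1] at this
    exact this.symm

/-- The subgroup of scalar matrices in `GL(2, F)`. -/
def scalarSubgroup : Subgroup (GL (Fin 2) F) where
  carrier := {g | ∃ c : Fˣ, (g : Matrix (Fin 2) (Fin 2) F) = (c : F) • 1}
  one_mem' := ⟨1, by simp⟩
  mul_mem' := by
    rintro a b ⟨c, hc⟩ ⟨d, hd⟩
    refine ⟨c * d, ?_⟩
    have : ((a * b : GL (Fin 2) F) : Matrix (Fin 2) (Fin 2) F)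
        = (a : Matrix (Fin 2) (Fin 2) F) * (b : Matrix (Fin 2) (Fin 2) F) := rfl
    rw [this, hc, hd, smul_mul_smul_comm, one_mul]
    push_cast
    rfl
  inv_mem' := by
    rintro a ⟨c, hc⟩
    refine ⟨c⁻¹, ?_⟩
    have h2 : (a : Matrix (Fin 2) (Fin 2) F) * (((c⁻¹ : Fˣ) : F) • 1) = 1 := by
      rw [hc, smul_mul_smul_comm, one_mul]
      have : (c : F) * ((c⁻¹ : Fˣ) : F) = 1 := by
        rw [← Units.val_mul, mul_inv_cancel, Units.val_one]
      rw [this, one_smul]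
    calc ((a⁻¹ : GL (Fin 2) F) : Matrix (Fin 2) (Fin 2) F)
        = (a⁻¹ : GL (Fin 2) F) * ((a : Matrix (Fin 2) (Fin 2) F) * (((c⁻¹ : Fˣ) : F) • 1)) := by
          rw [h2, mul_one]
      _ = (((a⁻¹ : GL (Fin 2) F) : Matrix (Fin 2) (Fin 2) F) * (a : Matrix (Fin 2) (Fin 2) F))
            * (((c⁻¹ : Fˣ) : F) • 1) := by rw [mul_assoc]
      _ = (((c⁻¹ : Fˣ) : F) • 1) := by rw [Units.inv_mul, one_mul]

instance scalarSubgroup_normal : (scalarSubgroup F).Normal := by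
  constructor
  rintro x ⟨c, hc⟩ g
  refine ⟨c, ?_⟩
  have h1 : ((g * x * g⁻¹ : GL (Fin 2) F) : Matrix (Fin 2) (Fin 2) F)
      = (g : Matrix (Fin 2) (Fin 2) F) * (x : Matrix (Fin 2) (Fin 2) F)
        * ((g⁻¹ : GL (Fin 2) F) : Matrix (Fin 2) (Fin 2) F) := rfl
  rw [h1, hc, mul_smul_comm, mul_one, smul_mul_assoc, Units.mul_inv]

/-- `PGL(2, F)`: the quotient of `GL(2, F)` by its subgroup of scalar matrices. -/
abbrev PGL2 := GL (Fin 2) F ⧸ scalarSubgroup F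

/-! Trace-zero matrices satisfy `A * A = -det A • 1`. So if `A` and `B` have equal determinants, then
`(B + A) * A = B * (B + A)` and `(B - A) * A = -B * (B - A)`; when the common determinant is nonzero,
one of `B ± A` is invertible by the parallelogram law, and conjugating by it maps `A` to `±B`. Up to
`±` and conjugation, an isometry therefore fixes `diag(1, -1)`. It then preserves the hyperbolic
plane of antidiagonal matrices, where it permutes and rescales the two isotropic lines, and this is
again `±` a conjugation. -/

section Ring

variable {R : Type*} [Ring R] {a b : R}

theorem semiconjBy_add_of_mul_self_eq (h : a * a = b * b) : SemiconjBy (b + a) a b := by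
  rw [SemiconjBy, add_mul, mul_add, h, add_comm]

theorem semiconjBy_sub_of_mul_self_eq (h : a * a = b * b) : SemiconjBy (b - a) a (-b) := by
  rw [SemiconjBy, sub_mul, neg_mul, mul_sub, h, neg_sub]

end Ring

section Matrix

variable {R : Type*} [CommRing R]

theorem mul_self_of_trace_eq_zero {A : Matrix (Fin 2) (Fin 2) R} (hA : A.trace = 0) :
    A * A = -A.det • 1 := by
  have hadj : A.adjugate = -A := by
    rw [trace_fin_two] at hA
    rw [eta_fin_two A, adjugate_fin_two_of, eq_neg_of_add_eq_zero_left hA]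
    simp
  rw [neg_smul, ← mul_adjugate, hadj, mul_neg, neg_neg]

theorem det_add_add_det_sub (A B : Matrix (Fin 2) (Fin 2) R) :
    (A + B).det + (A - B).det = 2 * (A.det + B.det) := by
  simp only [det_fin_two, Matrix.add_apply, Matrix.sub_apply]
  ring

end Matrix

section NegOnePow

variable (G : Type*) [Group G] [HasDistribNeg G]

/-- The homomorphism `z ↦ (-1) ^ z` from `ℤ/2ℤ`, written multiplicatively, to a group with a
distributive negation. -/
def negOnePowHom : Multiplicative (ZMod 2) →* G :=
  AddMonoidHom.toMultiplicativeLeft <| ZMod.lift 2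
    ⟨zmultiplesHom (Additive G) (Additive.ofMul (-1)), by
      rw [zmultiplesHom_apply, natCast_zsmul, ← ofMul_pow, neg_one_sq, ofMul_one]⟩

@[simp]
theorem negOnePowHom_ofAdd_one : negOnePowHom G (Multiplicative.ofAdd 1) = -1 :=
  congrArg Additive.toMul <| (ZMod.lift_coe 2 (A := Additive G) _ 1).trans (one_zsmul _)

end NegOnePow

theorem eq_one_or_eq_ofAdd_one (z : Multiplicative (ZMod 2)) :
    z = 1 ∨ z = Multiplicative.ofAdd 1 := by
  decide +revert

theorem commute_negOnePowHom {G : Type*} [Group G] [HasDistribNeg G]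
    (z : Multiplicative (ZMod 2)) (x : G) : Commute (negOnePowHom G z) x := by
  rcases eq_one_or_eq_ofAdd_one z with rfl | rfl
  · simp
  · rw [negOnePowHom_ofAdd_one]
    exact Commute.neg_one_left x

variable {F}

namespace sl2

theorem trace_eq_zero (A : sl2 F) : (A : Matrix (Fin 2) (Fin 2) F).trace = 0 := A.2

/-- The trace-zero matrix with rows `(a, b)` and `(c, -a)`. -/
def mk (a b c : F) : sl2 F := ⟨!![a, b; c, -a], by simp [sl2]⟩

@[simp]
theorem coe_mk (a b c : F) : (mk a b c : Matrix (Fin 2) (Fin 2) F) = !![a, b; c, -a] := rfl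

theorem exists_eq_mk (A : sl2 F) : ∃ a b c, A = mk a b c := by
  have h := trace_eq_zero A
  rw [trace_fin_two] at h
  refine ⟨A.1 0 0, A.1 0 1, A.1 1 0, Subtype.ext ?_⟩
  rw [coe_mk, ← eq_neg_of_add_eq_zero_right h]
  exact eta_fin_two _

theorem mk_add_mk (a b c a' b' c' : F) :
    mk a b c + mk a' b' c' = mk (a + a') (b + b') (c + c') :=
  Subtype.ext <| by simp [add_comm]

theorem smul_mk (t a b c : F) : t • mk a b c = mk (t * a) (t * b) (t * c) :=
  Subtype.ext <| by simp

theorem neg_mk (a b c : F) : -mk a b c = mk (-a) (-b) (-c) :=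
  Subtype.ext <| by simp

theorem mk_eq_linear_combination (a b c : F) :
    mk a b c = a • mk 1 0 0 + b • mk 0 1 0 + c • mk 0 0 1 := by
  simp [smul_mk, mk_add_mk]

theorem det_mk (a b c : F) : (mk a b c : Matrix (Fin 2) (Fin 2) F).det = -(a ^ 2 + b * c) := by
  rw [coe_mk, det_fin_two_of]
  ring

end sl2

open sl2

theorem mem_scalarSubgroup_iff_forall_commute {g : GL (Fin 2) F} :
    g ∈ scalarSubgroup F ↔ ∀ A : sl2 F, Commute (g : Matrix (Fin 2) (Fin 2) F) A := by
  constructor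
  · rintro ⟨c, hc⟩ A
    rw [hc]
    exact (Commute.one_left _).smul_left _
  · intro h
    obtain ⟨c, hc⟩ := mem_range_scalar_of_commute_single fun i j hij =>
      (h ⟨single i j 1, trace_single_eq_of_ne i j 1 hij⟩).symm
    have hc0 : c ≠ 0 := by
      rintro rfl
      exact g.ne_zero (hc.symm.trans (map_zero _))
    exact ⟨Units.mk0 c hc0, by rw [← hc, Units.val_mk0, smul_one_eq_diagonal, scalar_apply]⟩

namespace O3

theorem det_smul (T : O3 F) (A : sl2 F) :
    ((T • A : sl2 F) : Matrix (Fin 2) (Fin 2) F).det = (A : Matrix (Fin 2) (Fin 2) F).det :=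
  T.2 A

/-- The isometry `-T : A ↦ -T A`. -/
instance : Neg (O3 F) where
  neg T := ⟨LinearEquiv.neg F * T.1, fun A => by
    rw [← T.2 A]
    exact (det_neg _).trans (by simp)⟩

@[simp]
theorem neg_smul (T : O3 F) (A : sl2 F) : (-T) • A = -(T • A) := rfl

theorem ext_smul {S T : O3 F} (h : ∀ A : sl2 F, S • A = T • A) : S = T :=
  FaithfulSMul.eq_of_smul_eq_smul h

instance : HasDistribNeg (O3 F) where
  neg_neg T := ext_smul fun A => by simp
  neg_mul S T := ext_smul fun A => by simp [mul_smul]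
  mul_neg S T := ext_smul fun A => by simp [mul_smul]

/-- The action of `GL(2, F)` on `sl₂(F)` by conjugation, as a homomorphism to the isometry group. -/
def conj : GL (Fin 2) F →* O3 F where
  toFun g :=
    ⟨{ toFun A := ⟨g * A * (g⁻¹ : GL (Fin 2) F), (trace_units_conj g _).trans A.2⟩
       invFun A := ⟨(g⁻¹ : GL (Fin 2) F) * A * g, (trace_units_conj' g _).trans A.2⟩
       map_add' A B := Subtype.ext <| by simp [mul_add, add_mul]
       map_smul' c A := Subtype.ext <| by simp
       left_inv A := Subtype.ext <| by simp [mul_assoc]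
       right_inv A := Subtype.ext <| by simp [mul_assoc] },
      fun A => det_units_conj g A⟩
  map_one' := ext_smul fun A => Subtype.ext <| by simp [Subgroup.smul_def]
  map_mul' g h := ext_smul fun A => Subtype.ext <| by simp [Subgroup.smul_def, mul_assoc]

theorem coe_conj_smul (g : GL (Fin 2) F) (A : sl2 F) :
    ((conj g • A : sl2 F) : Matrix (Fin 2) (Fin 2) F) = g * A * (g⁻¹ : GL (Fin 2) F) := rfl

theorem conj_smul_eq_iff {g : GL (Fin 2) F} {A B : sl2 F} :
    conj g • A = B ↔ SemiconjBy (g : Matrix (Fin 2) (Fin 2) F) A B := by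
  rw [← Subtype.coe_inj, coe_conj_smul, Units.mul_inv_eq_iff_eq_mul, SemiconjBy]

theorem ker_conj : (conj : GL (Fin 2) F →* O3 F).ker = scalarSubgroup F := by
  ext g
  rw [MonoidHom.mem_ker, mem_scalarSubgroup_iff_forall_commute]
  simp_rw [Commute, ← conj_smul_eq_iff]
  exact ⟨fun h A => by rw [h, one_smul], fun h => ext_smul fun A => (h A).trans (one_smul _ A).symm⟩

theorem conj_ne_neg_one [NeZero (2 : F)] (g : GL (Fin 2) F) : conj g ≠ -1 := by
  intro h
  have hneg (A : sl2 F) : SemiconjBy (g : Matrix (Fin 2) (Fin 2) F) A (-A : sl2 F) :=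
    conj_smul_eq_iff.1 <| by rw [h, neg_smul, one_smul]
  -- With `H = diag(1, -1)` and `E = E₁₂` we have `E = H * E = (-H) * (-E)`.
  have hfix : conj g • mk 0 1 0 = (mk 0 1 0 : sl2 F) :=
    conj_smul_eq_iff.2 <| by simpa using (hneg (mk 1 0 0)).mul_right (hneg (mk 0 1 0))
  rw [h, neg_smul, one_smul, neg_mk] at hfix
  have h01 : (-1 : F) = 1 := congrArg (fun A : sl2 F => A.1 0 1) hfix
  exact two_ne_zero (α := F) (by linear_combination -h01)

variable (F) in
/-- The homomorphism `(z, [g]) ↦ (A ↦ (-1) ^ z • g * A * g⁻¹)`. -/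
def signedConj : Multiplicative (ZMod 2) × PGL2 F →* O3 F :=
  (negOnePowHom (O3 F)).noncommCoprod (QuotientGroup.lift (scalarSubgroup F) conj ker_conj.ge)
    fun z _ => commute_negOnePowHom z _

@[simp]
theorem signedConj_one_mk (g : GL (Fin 2) F) :
    signedConj F (1, QuotientGroup.mk g) = conj g := by
  simp [signedConj]

@[simp]
theorem signedConj_ofAdd_one_mk (g : GL (Fin 2) F) :
    signedConj F (Multiplicative.ofAdd 1, QuotientGroup.mk g) = -conj g := by
  simp [signedConj]

theorem injective_signedConj [NeZero (2 : F)] : Function.Injective (signedConj F) := by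
  rw [injective_iff_map_eq_one]
  rintro ⟨z, x⟩ h
  obtain ⟨g, rfl⟩ := QuotientGroup.mk_surjective x
  rcases eq_one_or_eq_ofAdd_one z with rfl | rfl
  · rw [signedConj_one_mk, ← MonoidHom.mem_ker, ker_conj] at h
    exact Prod.ext rfl ((QuotientGroup.eq_one_iff g).2 h)
  · rw [signedConj_ofAdd_one_mk, neg_eq_iff_eq_neg] at h
    exact absurd h (conj_ne_neg_one g)

theorem conj_mem_range_signedConj (g : GL (Fin 2) F) : conj g ∈ (signedConj F).range :=
  ⟨_, signedConj_one_mk g⟩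

theorem neg_conj_mem_range_signedConj (g : GL (Fin 2) F) : -conj g ∈ (signedConj F).range :=
  ⟨_, signedConj_ofAdd_one_mk g⟩

theorem exists_mem_range_signedConj_smul_eq [NeZero (2 : F)] {A B : sl2 F}
    (h : (A : Matrix (Fin 2) (Fin 2) F).det = (B : Matrix (Fin 2) (Fin 2) F).det)
    (hA : (A : Matrix (Fin 2) (Fin 2) F).det ≠ 0) :
    ∃ T ∈ (signedConj F).range, T • A = B := by
  have hsq : (A : Matrix (Fin 2) (Fin 2) F) * A = B * B := by
    rw [mul_self_of_trace_eq_zero (trace_eq_zero A), mul_self_of_trace_eq_zero (trace_eq_zero B), h]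
  by_cases hadd : (B + A : Matrix (Fin 2) (Fin 2) F).det = 0
  · have hsub : (B - A : Matrix (Fin 2) (Fin 2) F).det ≠ 0 := by
      have hpar := det_add_add_det_sub (B : Matrix (Fin 2) (Fin 2) F) A
      rw [hadd, zero_add, ← h, ← two_mul] at hpar
      rw [hpar]
      exact mul_ne_zero two_ne_zero (mul_ne_zero two_ne_zero hA)
    refine ⟨_, neg_conj_mem_range_signedConj (.mkOfDetNeZero _ hsub), ?_⟩
    rw [neg_smul, neg_eq_iff_eq_neg]
    exact conj_smul_eq_iff.2 (semiconjBy_sub_of_mul_self_eq hsq)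
  · exact ⟨_, conj_mem_range_signedConj (.mkOfDetNeZero _ hadd),
      conj_smul_eq_iff.2 (semiconjBy_add_of_mul_self_eq hsq)⟩

theorem smul_mk_eq_linear_combination (T : O3 F) (a b c : F) :
    T • mk a b c = a • T • mk 1 0 0 + b • T • mk 0 1 0 + c • T • mk 0 0 1 := by
  rw [mk_eq_linear_combination, smul_add, smul_add, smul_comm T a, smul_comm T b, smul_comm T c]

theorem exists_smul_mk_zero_eq [NeZero (2 : F)] {T : O3 F} (hT : T • mk 1 0 0 = (mk 1 0 0 : sl2 F))
    (b c : F) : ∃ b' c', T • mk 0 b c = mk 0 b' c' ∧ b' * c' = b * c := by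
  obtain ⟨p, q, r, hpqr⟩ := exists_eq_mk (T • mk 0 b c)
  have hadd : T • mk 1 b c = mk (1 + p) q r := by
    have hmk : (mk 1 b c : sl2 F) = mk 1 0 0 + mk 0 b c := by simp [mk_add_mk]
    rw [hmk, smul_add, hT, hpqr, mk_add_mk, zero_add, zero_add]
  have h₀ := det_smul T (mk 0 b c)
  have h₁ := det_smul T (mk 1 b c)
  rw [hpqr, det_mk, det_mk] at h₀
  rw [hadd, det_mk, det_mk] at h₁
  have hp : p = 0 := by
    have h2p : 2 * p = 0 := by linear_combination h₀ - h₁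
    exact (mul_eq_zero.1 h2p).resolve_left two_ne_zero
  subst hp
  exact ⟨q, r, hpqr, by linear_combination -h₀⟩

theorem exists_smul_mk_eq [NeZero (2 : F)] {T : O3 F} (hT : T • mk 1 0 0 = (mk 1 0 0 : sl2 F)) :
    ∃ t : F, t ≠ 0 ∧ ((∀ a b c, T • mk a b c = mk a (t * b) (t⁻¹ * c)) ∨
      ∀ a b c, T • mk a b c = mk a (t * c) (t⁻¹ * b)) := by
  obtain ⟨b₁, c₁, h₁, hprod₁⟩ := exists_smul_mk_zero_eq hT 1 0
  obtain ⟨b₂, c₂, h₂, hprod₂⟩ := exists_smul_mk_zero_eq hT 0 1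
  have hmk (a b c : F) : T • mk a b c = mk a (b * b₁ + c * b₂) (b * c₁ + c * c₂) := by
    simp [smul_mk_eq_linear_combination T a b c, hT, h₁, h₂, smul_mk, mk_add_mk]
  have hsum : b₁ * c₂ + b₂ * c₁ = 1 := by
    have hdet := det_smul T (mk 0 1 1)
    rw [hmk, det_mk, det_mk] at hdet
    linear_combination -hdet - hprod₁ - hprod₂
  rw [mul_zero] at hprod₁
  rw [zero_mul] at hprod₂
  rcases mul_eq_zero.1 hprod₁ with rfl | rfl
  · have hunit : b₂ * c₁ = 1 := by simpa using hsum
    have hb₂ : b₂ ≠ 0 := left_ne_zero_of_mul_eq_one hunit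
    obtain rfl := (mul_eq_zero.1 hprod₂).resolve_left hb₂
    obtain rfl := eq_inv_of_mul_eq_one_right hunit
    exact ⟨b₂, hb₂, .inr fun a b c => by simp [hmk, mul_comm]⟩
  · have hunit : b₁ * c₂ = 1 := by simpa using hsum
    obtain rfl := (mul_eq_zero.1 hprod₂).resolve_right (right_ne_zero_of_mul_eq_one hunit)
    obtain rfl := eq_inv_of_mul_eq_one_right hunit
    exact ⟨b₁, left_ne_zero_of_mul_eq_one hunit, .inl fun a b c => by simp [hmk, mul_comm]⟩

theorem mem_range_signedConj_of_smul_mk_eq [NeZero (2 : F)] {T : O3 F}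
    (hT : T • mk 1 0 0 = (mk 1 0 0 : sl2 F)) : T ∈ (signedConj F).range := by
  obtain ⟨t, ht₀, ht | ht⟩ := exists_smul_mk_eq hT
  · let g : GL (Fin 2) F := .mkOfDetNeZero !![t, 0; 0, 1] (by simpa)
    have hTg : conj g = T := ext_smul fun A => by
      obtain ⟨a, b, c, rfl⟩ := exists_eq_mk A
      rw [ht, conj_smul_eq_iff]
      simp [g, SemiconjBy, mul_comm a, mul_right_comm _ _ t, ht₀]
    exact hTg ▸ conj_mem_range_signedConj g
  · let g : GL (Fin 2) F := .mkOfDetNeZero !![0, t; -1, 0] (by simpa)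
    have hTg : -conj g = T := ext_smul fun A => by
      obtain ⟨a, b, c, rfl⟩ := exists_eq_mk A
      rw [ht, neg_smul, neg_eq_iff_eq_neg, neg_mk, conj_smul_eq_iff]
      simp [g, SemiconjBy, mul_comm a, mul_right_comm _ _ t, ht₀]
    exact hTg ▸ neg_conj_mem_range_signedConj g

theorem surjective_signedConj [NeZero (2 : F)] : Function.Surjective (signedConj F) := by
  intro T
  have hdet : ((mk 1 0 0 : sl2 F) : Matrix (Fin 2) (Fin 2) F).det ≠ 0 := by simp
  obtain ⟨R, hR, hRT⟩ := exists_mem_range_signedConj_smul_eq (det_smul T (mk 1 0 0)).symm hdet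
  have hfix : (R⁻¹ * T) • mk 1 0 0 = (mk 1 0 0 : sl2 F) := by
    rw [mul_smul, inv_smul_eq_iff, hRT]
  exact (Subgroup.mul_mem_cancel_left _ (inv_mem hR)).1 (mem_range_signedConj_of_smul_mk_eq hfix)

end O3

theorem two_ne_zero_of_odd_card [Fintype F] (hq : Odd (Fintype.card F)) : (2 : F) ≠ 0 :=
  Ring.two_ne_zero fun h => Nat.not_even_iff_odd.2 hq <|
    Nat.even_iff.2 <| FiniteField.even_card_of_char_two h

variable (F)

theorem O3_iso_Z2_times_PGL2_general [NeZero (2 : F)] :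
    ∃ e : (Multiplicative (ZMod 2) × PGL2 F) ≃* O3 F,
      (∀ (g : GL (Fin 2) F) (A : sl2 F),
        ((↑(e (1, (QuotientGroup.mk g : PGL2 F))) : (sl2 F) ≃ₗ[F] (sl2 F)) A
            : Matrix (Fin 2) (Fin 2) F)
          = (g : Matrix (Fin 2) (Fin 2) F) * (A : Matrix (Fin 2) (Fin 2) F)
            * ((g⁻¹ : GL (Fin 2) F) : Matrix (Fin 2) (Fin 2) F))
      ∧ (∀ A : sl2 F,
        ((↑(e (Multiplicative.ofAdd (1 : ZMod 2), 1)) : (sl2 F) ≃ₗ[F] (sl2 F)) A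
            : Matrix (Fin 2) (Fin 2) F)
          = -(A : Matrix (Fin 2) (Fin 2) F)) := by
  let e := MulEquiv.ofBijective (O3.signedConj F)
    ⟨O3.injective_signedConj, O3.surjective_signedConj⟩
  have he_conj (g : GL (Fin 2) F) : e (1, QuotientGroup.mk g) = O3.conj g :=
    O3.signedConj_one_mk g
  have he_neg : e (Multiplicative.ofAdd 1, 1) = -1 :=
    (O3.signedConj_ofAdd_one_mk 1).trans (by rw [map_one])
  refine ⟨e, fun g A => ?_, fun A => ?_⟩
  · rw [he_conj]
    exact O3.coe_conj_smul g A
  · rw [he_neg]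
    rfl

/-- **Lemma B.5**: for a finite field `F` of odd order `q`, the isometry group
`O(3, q)` of the quadratic space `(sl₂(F), det)` is isomorphic to
`ℤ/2ℤ × PGL(2, F)`, where the `PGL(2, F)`-factor acts by conjugation `A ↦ g A g⁻¹`
and the generator of the `ℤ/2ℤ`-factor acts by `A ↦ -A`. -/
theorem O3_iso_Z2_times_PGL2 [Fintype F] (hq : Odd (Fintype.card F)) :
    ∃ e : (Multiplicative (ZMod 2) × PGL2 F) ≃* O3 F,
      (∀ (g : GL (Fin 2) F) (A : sl2 F),
        ((↑(e (1, (QuotientGroup.mk g : PGL2 F))) : (sl2 F) ≃ₗ[F] (sl2 F)) A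
            : Matrix (Fin 2) (Fin 2) F)
          = (g : Matrix (Fin 2) (Fin 2) F) * (A : Matrix (Fin 2) (Fin 2) F)
            * ((g⁻¹ : GL (Fin 2) F) : Matrix (Fin 2) (Fin 2) F))
      ∧ (∀ A : sl2 F,
        ((↑(e (Multiplicative.ofAdd (1 : ZMod 2), 1)) : (sl2 F) ≃ₗ[F] (sl2 F)) A
            : Matrix (Fin 2) (Fin 2) F)
          = -(A : Matrix (Fin 2) (Fin 2) F)) := by
  have : NeZero (2 : F) := ⟨two_ne_zero_of_odd_card hq⟩
  exact O3_iso_Z2_times_PGL2_general F
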